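/- Let M be an n×n real positive semidefinite symmetric matrix with spectral decomposition M = UΣUᵀ (U orthogonal with columns Uᵢ, eigenvalues σ₁ ≥ … ≥ σₙ ≥ 0), let y ∈ ℝⁿ, let γ₀ > 0, and set σᵢ' := σᵢ + γ₀. If γ > γ₀ and β ∈ ℝⁿ satisfies (M + γIₙ)β = y, then setting λᵢ := 1/(σᵢ + γ) for each i, the pair (λ₁,…,λₙ, β) satisfies: Uᵢᵀβ = λᵢ Uᵢᵀy for all i; 0 < λᵢ ≤ 1/σᵢ' for all i; and (σᵢ₊₁'/σᵢ')·λᵢ₊₁ ≤ λᵢ ≤ λᵢ₊₁ for all i = 1,…,n−1. In other words, the ridge solution set is contained in the polytope R. -/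

import Mathlib

open Matrix

/-- Every point of the ridge solution set lies in the relaxation polytope `R`:
if `γ > γ₀` and `(M + γI)β = y`, then `λᵢ := 1/(σᵢ + γ)` together with `β`
satisfies the defining equalities and inequalities of `R`
(with `σᵢ' = σᵢ + γ₀`). -/
theorem ridge_solution_mem_relaxation {n : ℕ} (M U : Matrix (Fin n) (Fin n) ℝ)
    (σ : Fin n → ℝ) (hM : M.PosSemidef) (hU : Uᵀ * U = 1)
    (hdecomp : M = U * Matrix.diagonal σ * Uᵀ) (hσ_nonneg : ∀ i, 0 ≤ σ i)
    (hσ_mono : ∀ i j : Fin n, i ≤ j → σ j ≤ σ i)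
    (y β : Fin n → ℝ) (γ₀ γ : ℝ) (hγ₀ : 0 < γ₀) (hγ : γ₀ < γ)
    (hβ : (M + γ • 1).mulVec β = y) :
    (∀ i, Uᵀ i ⬝ᵥ β = (1 / (σ i + γ)) * (Uᵀ i ⬝ᵥ y)) ∧
    (∀ i, 0 < 1 / (σ i + γ) ∧ 1 / (σ i + γ) ≤ 1 / (σ i + γ₀)) ∧
    (∀ i : Fin n, ∀ hi : (i : ℕ) + 1 < n,
      (σ ⟨i + 1, hi⟩ + γ₀) / (σ i + γ₀) * (1 / (σ ⟨i + 1, hi⟩ + γ)) ≤ 1 / (σ i + γ) ∧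
      1 / (σ i + γ) ≤ 1 / (σ ⟨i + 1, hi⟩ + γ)) := by
  have hpos : ∀ i, 0 < σ i + γ := fun i => by have := hσ_nonneg i; linarith
  have hpos₀ : ∀ i, 0 < σ i + γ₀ := fun i => by have := hσ_nonneg i; linarith
  refine ⟨?_, ?_, ?_⟩
  · intro i
    have h1 : Uᵀ * (M + γ • 1) = Matrix.diagonal σ * Uᵀ + γ • Uᵀ := by
      rw [hdecomp, Matrix.mul_add, Matrix.mul_assoc U, ← Matrix.mul_assoc Uᵀ U, hU,
        Matrix.one_mul, Matrix.mul_smul, Matrix.mul_one]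
    have h2 : Uᵀ *ᵥ y = Matrix.diagonal σ *ᵥ (Uᵀ *ᵥ β) + γ • (Uᵀ *ᵥ β) := by
      rw [← hβ, Matrix.mulVec_mulVec, h1, Matrix.add_mulVec, Matrix.mulVec_mulVec,
        Matrix.smul_mulVec]
    have h3 := congrFun h2 i
    rw [Pi.add_apply, Matrix.mulVec_diagonal, Pi.smul_apply, smul_eq_mul] at h3
    change Uᵀ i ⬝ᵥ y = σ i * (Uᵀ i ⬝ᵥ β) + γ * (Uᵀ i ⬝ᵥ β) at h3
    have := (hpos i).ne'
    rw [h3]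
    field_simp
  · intro i
    exact ⟨one_div_pos.mpr (hpos i), one_div_le_one_div_of_le (hpos₀ i) (by linarith)⟩
  · intro i hi
    have hle : σ ⟨i + 1, hi⟩ ≤ σ i := hσ_mono _ _ (by rw [Fin.le_def]; simp)
    refine ⟨?_, one_div_le_one_div_of_le (hpos _) (by linarith)⟩
    rw [div_mul_div_comm, div_le_div_iff₀ (mul_pos (hpos₀ _) (hpos _)) (hpos _)]
    nlinarith [mul_nonneg (sub_nonneg.mpr hle) (sub_nonneg.mpr hγ.le)]
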